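/- arXiv:1009.5783 — 3 statements merged into one kernel-verified Lean document; each statement's English description precedes it below -/
import Mathlib

section
/- Let (W,S) be a finite Coxeter system with length function ℓ, and let w₀ ∈ W be an element of maximal length. Let x, y ∈ W with ℓ(x⁻¹y) = ℓ(w₀). Let J ⊆ S, g ∈ W, and suppose x₁ ∈ gW_J satisfies ℓ(x⁻¹x₁) ≤ ℓ(x⁻¹v) for all v ∈ gW_J, and y₁ ∈ gW_J satisfies ℓ(y⁻¹y₁) ≤ ℓ(y⁻¹v) for all v ∈ gW_J. Then ℓ(x⁻¹y) = ℓ(x⁻¹x₁) + ℓ(x₁⁻¹y₁) + ℓ(y₁⁻¹y). (This is the gallery-distance identity established in the proof of Lemma 'opp': the projections x₁ and y₁ lie on a shortest gallery joining the opposite chambers x and y.) -/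
/-!
Let a simple reflection `s` act on `W × ZMod 2` by `(t, z) ↦ (s t s, z + [t = s])`. A word `ω` with
product `w` then acts by `(t, z) ↦ (w t w⁻¹, z + n)`, where `n` is the number of occurrences of `t`
in the right inversion sequence of `ω`. For a braid relation `n` is even, so `W` itself acts, and
the parity of `n` depends only on `w` and `t`; it is odd exactly when `t` is a right inversion
of `w`. As parities add along products, the right inversions of `u v` are the symmetric difference
of those of `v` and the `v⁻¹`-conjugates of those of `u`. Since `ℓ w` is the number of inversions
of `w`, lengths add in `u v` as soon as no right inversion of `u` is a left inversion of `v`. This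
happens when `u v` has maximal length, since then every reflection is an inversion of `u v`, and
when `u` is minimal in `u W_J` and `v ∈ W_J`, since all inversions of `v` then lie in `W_J` and no
right inversion of `u` does.
-/

namespace CoxeterGallery

open CoxeterSystem

section AlternatingWord

variable {B : Type*}

theorem reverse_alternatingWord_two_mul (i j : B) (m : ℕ) :
    (alternatingWord i j (2 * m)).reverse = alternatingWord j i (2 * m) := by
  induction m with
  | zero => rfl
  | succ m ih =>
    rw [Nat.mul_succ, alternatingWord_succ, alternatingWord_succ, alternatingWord_succ' j i,
      alternatingWord_succ' j i]
    simp [ih]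

theorem prod_map_alternatingWord_two_mul {G : Type*} [Monoid G] (f : B → G) (i j : B) (m : ℕ) :
    ((alternatingWord i j (2 * m)).map f).prod = (f i * f j) ^ m := by
  induction m with
  | zero => simp [alternatingWord]
  | succ m ih =>
    rw [Nat.mul_succ, alternatingWord_succ', alternatingWord_succ', pow_succ', ← ih]
    simp [mul_assoc]

end AlternatingWord

variable {B : Type*} {W : Type*} [Group W] {M : CoxeterMatrix B} (cs : CoxeterSystem M W)

theorem drop_eq_take_leftInvSeq_alternatingWord (i j : B) :
    (cs.leftInvSeq (alternatingWord i j (2 * M i j))).drop (M i j) =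
      (cs.leftInvSeq (alternatingWord i j (2 * M i j))).take (M i j) := by
  have hlength : (cs.leftInvSeq (alternatingWord i j (2 * M i j))).length = 2 * M i j := by simp
  refine List.ext_getElem (by rw [List.length_drop, List.length_take]; omega) fun k hk _ => ?_
  rw [List.length_drop, hlength] at hk
  rw [List.getElem_drop, List.getElem_take,
    getElem_leftInvSeq_alternatingWord cs i j _ _ (by omega),
    getElem_leftInvSeq_alternatingWord cs i j _ _ (by omega), prod_alternatingWord_eq_mul_pow,
    prod_alternatingWord_eq_mul_pow]
  have hdiv (n : ℕ) : (2 * n + 1) / 2 = n := by omega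
  simp [hdiv, pow_add]

open scoped Classical in
theorem even_count_rightInvSeq_alternatingWord (i j : B) (t : W) :
    Even ((cs.rightInvSeq (alternatingWord i j (2 * M i j))).count t) := by
  rw [← reverse_alternatingWord_two_mul, rightInvSeq_reverse, List.count_reverse, M.symmetric i j,
    ← List.take_append_drop (M j i) (cs.leftInvSeq _), drop_eq_take_leftInvSeq_alternatingWord,
    List.count_append]
  exact Even.add_self _

open scoped Classical in
/-- The effect of a simple reflection `s` on `W × ZMod 2`: it conjugates the first component and
switches the second one at `s` itself. -/
noncomputable def simpleMap (i : B) (p : W × ZMod 2) : W × ZMod 2 :=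
  (cs.simple i * p.1 * cs.simple i, p.2 + if p.1 = cs.simple i then 1 else 0)

theorem involutive_simpleMap (i : B) : Function.Involutive (simpleMap cs i) := by
  classical
  rintro ⟨t, z⟩
  have hfix : cs.simple i * t * cs.simple i = cs.simple i ↔ t = cs.simple i := by
    rw [mul_eq_right, mul_eq_one_iff_inv_eq, cs.inv_simple, eq_comm]
  ext
  · simp [simpleMap, mul_assoc]
  · simp only [simpleMap, hfix, add_assoc, CharTwo.add_self_eq_zero, add_zero]

/-- `simpleMap` as a permutation, in the form that lifts to the Coxeter group. -/
noncomputable def simplePerm (i : B) : Equiv.Perm (W × ZMod 2) :=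
  (involutive_simpleMap cs i).toPerm

open scoped Classical in
theorem prod_map_simplePerm_apply (ω : List B) (t : W) (z : ZMod 2) :
    (ω.map (simplePerm cs)).prod (t, z) =
      (cs.wordProd ω * t * (cs.wordProd ω)⁻¹, z + ((cs.rightInvSeq ω).count t : ZMod 2)) := by
  induction ω with
  | nil => simp
  | cons i ω ih =>
    have hnew : cs.wordProd ω * t * (cs.wordProd ω)⁻¹ = cs.simple i ↔
        (cs.wordProd ω)⁻¹ * cs.simple i * cs.wordProd ω = t := by
      rw [mul_inv_eq_iff_eq_mul, ← eq_inv_mul_iff_mul_eq, mul_assoc, eq_comm]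
    rw [List.map_cons, List.prod_cons, Equiv.Perm.mul_apply, ih]
    ext
    · simp [simplePerm, simpleMap, wordProd_cons, mul_assoc]
    · simp [simplePerm, simpleMap, rightInvSeq, List.count_cons, hnew, add_assoc]

theorem isLiftable_simplePerm : M.IsLiftable (simplePerm cs) := by
  classical
  intro i j
  ext1 ⟨t, z⟩
  rw [← prod_map_alternatingWord_two_mul, prod_map_simplePerm_apply,
    (ZMod.natCast_eq_zero_iff_even).2 (even_count_rightInvSeq_alternatingWord cs i j t),
    prod_alternatingWord_eq_mul_pow]
  simp

/-- The action of `W` on `W × ZMod 2` extending `simplePerm`; it is conjugation on the first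
component and records the parity of inversions in the second. -/
noncomputable def reflectionAction : W →* Equiv.Perm (W × ZMod 2) :=
  cs.lift ⟨simplePerm cs, isLiftable_simplePerm cs⟩

open scoped Classical in
theorem reflectionAction_wordProd_apply (ω : List B) (t : W) (z : ZMod 2) :
    reflectionAction cs (cs.wordProd ω) (t, z) =
      (cs.wordProd ω * t * (cs.wordProd ω)⁻¹, z + ((cs.rightInvSeq ω).count t : ZMod 2)) := by
  have hsimple : reflectionAction cs ∘ cs.simple = simplePerm cs :=
    funext (cs.lift_apply_simple (isLiftable_simplePerm cs))
  rw [← prod_map_simplePerm_apply, wordProd, map_list_prod, List.map_map, hsimple]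

/-- The parity of the number of occurrences of `t` in the right inversion sequence of any word
with product `w`. -/
noncomputable def inversionParity (w t : W) : ZMod 2 := (reflectionAction cs w (t, 0)).2

open scoped Classical in
theorem inversionParity_wordProd (ω : List B) (t : W) :
    inversionParity cs (cs.wordProd ω) t = (cs.rightInvSeq ω).count t := by
  rw [inversionParity, reflectionAction_wordProd_apply, zero_add]

theorem reflectionAction_apply (w t : W) (z : ZMod 2) :
    reflectionAction cs w (t, z) = (w * t * w⁻¹, z + inversionParity cs w t) := by
  classical
  obtain ⟨ω, rfl⟩ := cs.wordProd_surjective w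
  rw [reflectionAction_wordProd_apply, inversionParity_wordProd]

theorem inversionParity_mul (u v t : W) :
    inversionParity cs (u * v) t =
      inversionParity cs v t + inversionParity cs u (v * t * v⁻¹) := by
  rw [inversionParity, map_mul, Equiv.Perm.mul_apply, reflectionAction_apply,
    reflectionAction_apply, zero_add]

theorem inversionParity_one (t : W) : inversionParity cs 1 t = 0 := by
  simp [inversionParity]

theorem inversionParity_simple_self (i : B) :
    inversionParity cs (cs.simple i) (cs.simple i) = 1 := by
  classical
  simpa using inversionParity_wordProd cs [i] (cs.simple i)

variable {cs}

theorem mem_rightInvSeq_of_inversionParity_ne_zero {ω : List B} {t : W}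
    (h : inversionParity cs (cs.wordProd ω) t ≠ 0) : t ∈ cs.rightInvSeq ω := by
  classical
  rw [inversionParity_wordProd] at h
  by_contra ht
  exact h (by rw [List.count_eq_zero_of_not_mem ht, Nat.cast_zero])

theorem isRightInversion_of_inversionParity_ne_zero {w t : W}
    (h : inversionParity cs w t ≠ 0) : cs.IsRightInversion w t := by
  obtain ⟨ω, hω, rfl⟩ := cs.exists_isReduced w
  exact cs.isRightInversion_of_mem_rightInvSeq hω (mem_rightInvSeq_of_inversionParity_ne_zero h)

theorem inversionParity_self {t : W} (ht : cs.IsReflection t) : inversionParity cs t t = 1 := by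
  obtain ⟨w, i, rfl⟩ := ht
  have hcancel := inversionParity_mul cs w w⁻¹ (w * cs.simple i * w⁻¹)
  have hconj : w⁻¹ * (w * cs.simple i * w⁻¹) * w⁻¹⁻¹ = cs.simple i := by group
  rw [mul_inv_cancel, inversionParity_one, hconj] at hcancel
  rw [inversionParity_mul, hconj, inversionParity_mul, inversionParity_simple_self,
    mul_inv_cancel_right]
  linear_combination -hcancel

theorem inversionParity_ne_zero_iff {w t : W} :
    inversionParity cs w t ≠ 0 ↔ cs.IsRightInversion w t := by
  refine ⟨isRightInversion_of_inversionParity_ne_zero, fun ⟨ht, hlt⟩ hzero => ?_⟩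
  -- Otherwise `t` would be an inversion of `w * t`, and `w = (w * t) * t` shorter than `w * t`.
  have hparity : inversionParity cs (w * t) t = 1 := by
    rw [inversionParity_mul, inversionParity_self ht, mul_inv_cancel_right, hzero, add_zero]
  have hgt := (isRightInversion_of_inversionParity_ne_zero (hparity ▸ one_ne_zero)).2
  rw [mul_assoc, ht.mul_self, mul_one] at hgt
  exact lt_asymm hlt hgt

theorem isRightInversion_mul_iff {u v t : W} :
    cs.IsRightInversion (u * v) t ↔
      Xor (cs.IsRightInversion v t) (cs.IsRightInversion u (v * t * v⁻¹)) := by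
  simp only [← inversionParity_ne_zero_iff, inversionParity_mul]
  generalize inversionParity cs v t = a, inversionParity cs u (v * t * v⁻¹) = b
  decide +revert

theorem isLeftInversion_iff_isRightInversion_conj {w t : W} :
    cs.IsLeftInversion w t ↔ cs.IsRightInversion w (w⁻¹ * t * w) := by
  have hconj := cs.isReflection_conj_iff w⁻¹ t
  rw [inv_inv] at hconj
  rw [IsLeftInversion, IsRightInversion, hconj, mul_assoc, mul_inv_cancel_left]

theorem mem_rightInvSeq_iff {ω : List B} (hω : cs.IsReduced ω) {t : W} :
    t ∈ cs.rightInvSeq ω ↔ cs.IsRightInversion (cs.wordProd ω) t :=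
  ⟨cs.isRightInversion_of_mem_rightInvSeq hω, fun h =>
    mem_rightInvSeq_of_inversionParity_ne_zero (inversionParity_ne_zero_iff.2 h)⟩

variable (cs) in
theorem encard_setOf_isRightInversion (w : W) :
    {t | cs.IsRightInversion w t}.encard = cs.length w := by
  classical
  obtain ⟨ω, hω, rfl⟩ := cs.exists_isReduced w
  have hset : {t | cs.IsRightInversion (cs.wordProd ω) t} = (cs.rightInvSeq ω).toFinset := by
    ext t
    rw [Set.mem_ofPred_eq, List.coe_toFinset, Set.mem_ofPred_eq, mem_rightInvSeq_iff hω]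
  rw [hset, Set.encard_coe_eq_coe_finsetCard, List.toFinset_card_of_nodup hω.nodup_rightInvSeq,
    length_rightInvSeq, hω.eq]

theorem length_mul_of_forall_not_isLeftInversion {u v : W}
    (h : ∀ t, cs.IsRightInversion u t → ¬cs.IsLeftInversion v t) :
    cs.length (u * v) = cs.length u + cs.length v := by
  have hdisj (t : W) (hv : cs.IsRightInversion v t) : ¬cs.IsRightInversion u (v * t * v⁻¹) := by
    refine fun hu => h _ hu (isLeftInversion_iff_isRightInversion_conj.2 ?_)
    rwa [show v⁻¹ * (v * t * v⁻¹) * v = t by group]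
  have hunion : {t | cs.IsRightInversion (u * v) t} =
      MulAut.conj v ⁻¹' {t | cs.IsRightInversion u t} ∪ {t | cs.IsRightInversion v t} := by
    ext t
    simp only [Set.mem_ofPred_eq, Set.mem_union, Set.mem_preimage, MulAut.conj_apply,
      isRightInversion_mul_iff, Xor]
    have := hdisj t
    tauto
  have hdisjoint : Disjoint (MulAut.conj v ⁻¹' {t | cs.IsRightInversion u t})
      {t | cs.IsRightInversion v t} := Set.disjoint_right.2 hdisj
  have hcard := congrArg Set.encard hunion
  rw [Set.encard_union_eq hdisjoint, Set.encard_preimage_of_bijective (MulAut.conj v).bijective]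
    at hcard
  simpa only [encard_setOf_isRightInversion, ← Nat.cast_add, Nat.cast_inj] using hcard

theorem length_mul_of_forall_length_le {u v : W}
    (hmax : ∀ w, cs.length w ≤ cs.length (u * v)) :
    cs.length (u * v) = cs.length u + cs.length v := by
  refine length_mul_of_forall_not_isLeftInversion fun t hu hv => ?_
  rw [isLeftInversion_iff_isRightInversion_conj] at hv
  have huv : cs.IsRightInversion (u * v) (v⁻¹ * t * v) :=
    ⟨hv.1, lt_of_le_of_ne (hmax _) (hv.1.length_mul_left_ne _)⟩
  have hconj : v * (v⁻¹ * t * v) * v⁻¹ = t := by group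
  rw [isRightInversion_mul_iff, hconj] at huv
  exact huv.elim (fun h => h.2 hu) fun h => h.2 hv

theorem mem_closure_of_isRightInversion {J : Set B} {v t : W}
    (hv : v ∈ Subgroup.closure (cs.simple '' J)) (h : cs.IsRightInversion v t) :
    t ∈ Subgroup.closure (cs.simple '' J) := by
  induction hv using Subgroup.closure_induction generalizing t with
  | mem v hv =>
    obtain ⟨i, hi, rfl⟩ := hv
    have hone : cs.simple i * t = 1 := by simpa using h.2
    rw [← inv_eq_of_mul_eq_one_right hone, cs.inv_simple]
    exact Subgroup.subset_closure ⟨i, hi, rfl⟩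
  | one => simpa using h.2
  | mul a b _ hb iha ihb =>
    obtain ⟨h, -⟩ | ⟨h, -⟩ := isRightInversion_mul_iff.1 h
    · exact ihb h
    · exact (Subgroup.mem_normalizer_iff.1 (Subgroup.le_normalizer hb) t).2 (iha h)
  | inv a ha iha =>
    rw [isRightInversion_inv_iff, isLeftInversion_iff_isRightInversion_conj] at h
    exact (Subgroup.mem_normalizer_iff''.1 (Subgroup.le_normalizer ha) t).2 (iha h)

theorem length_mul_of_minimal_of_mem_closure {J : Set B} {u v : W}
    (hu : ∀ t ∈ Subgroup.closure (cs.simple '' J), cs.length u ≤ cs.length (u * t))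
    (hv : v ∈ Subgroup.closure (cs.simple '' J)) :
    cs.length (u * v) = cs.length u + cs.length v := by
  refine length_mul_of_forall_not_isLeftInversion fun t hut hvt => ?_
  have ht : t ∈ Subgroup.closure (cs.simple '' J) :=
    mem_closure_of_isRightInversion (inv_mem hv) (cs.isRightInversion_inv_iff.2 hvt)
  exact (hu t ht).not_gt hut.2

end CoxeterGallery

open CoxeterGallery in
theorem opp_gallery_distance_identity_general
    {B : Type*} {W : Type*} [Group W] {M : CoxeterMatrix B} (cs : CoxeterSystem M W)
    {x y : W} (hxy : ∀ w, cs.length w ≤ cs.length (x⁻¹ * y)) {J : Set B} {g x₁ v : W}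
    (hx₁ : g⁻¹ * x₁ ∈ Subgroup.closure (cs.simple '' J))
    (hx₁min : ∀ u, g⁻¹ * u ∈ Subgroup.closure (cs.simple '' J) →
      cs.length (x⁻¹ * x₁) ≤ cs.length (x⁻¹ * u))
    (hv : g⁻¹ * v ∈ Subgroup.closure (cs.simple '' J)) :
    cs.length (x⁻¹ * y) =
      cs.length (x⁻¹ * x₁) + cs.length (x₁⁻¹ * v) + cs.length (v⁻¹ * y) := by
  have hcomp (a b c : W) : a⁻¹ * b * (b⁻¹ * c) = a⁻¹ * c := by group
  have hx₁v : x₁⁻¹ * v ∈ Subgroup.closure (cs.simple '' J) := by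
    simpa [mul_assoc] using mul_mem (inv_mem hx₁) hv
  have hxv : cs.length (x⁻¹ * v) = cs.length (x⁻¹ * x₁) + cs.length (x₁⁻¹ * v) := by
    rw [← hcomp x x₁ v]
    refine length_mul_of_minimal_of_mem_closure (fun t ht => ?_) hx₁v
    rw [mul_assoc]
    exact hx₁min _ (by simpa only [mul_assoc] using mul_mem hx₁ ht)
  rw [← hcomp x v y] at hxy ⊢
  rw [length_mul_of_forall_length_le hxy, hxv]

/-- Gallery-distance identity from the proof of Lemma "opp": the projections `x₁`, `y₁`
of two opposite chambers `x`, `y` to a residue `g • W_J` lie on a shortest gallery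
joining `x` and `y`. -/
theorem opp_gallery_distance_identity
    {B : Type*} {W : Type*} [Group W] [Finite W] {M : CoxeterMatrix B}
    (cs : CoxeterSystem M W)
    (w₀ : W) (hw₀ : ∀ w : W, cs.length w ≤ cs.length w₀)
    (x y : W) (hxy : cs.length (x⁻¹ * y) = cs.length w₀)
    (J : Set B) (g : W)
    (WJ : Subgroup W) (hWJ : WJ = Subgroup.closure (cs.simple '' J))
    (x₁ : W) (hx₁ : g⁻¹ * x₁ ∈ WJ)
    (hx₁min : ∀ v : W, g⁻¹ * v ∈ WJ → cs.length (x⁻¹ * x₁) ≤ cs.length (x⁻¹ * v))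
    (y₁ : W) (hy₁ : g⁻¹ * y₁ ∈ WJ)
    (hy₁min : ∀ v : W, g⁻¹ * v ∈ WJ → cs.length (y⁻¹ * y₁) ≤ cs.length (y⁻¹ * v)) :
    cs.length (x⁻¹ * y) =
      cs.length (x⁻¹ * x₁) + cs.length (x₁⁻¹ * y₁) + cs.length (y₁⁻¹ * y) :=
  opp_gallery_distance_identity_general cs (fun w => hxy ▸ hw₀ w) (hWJ ▸ hx₁) (hWJ ▸ hx₁min)
    (hWJ ▸ hy₁)
end

section
/- Let (W,S) be a finite Coxeter system with length function ℓ, and let w₀ ∈ W be an element of maximal length. Let x, y ∈ W with ℓ(x⁻¹y) = ℓ(w₀), let J ⊆ S, g ∈ W, and suppose x₁ ∈ gW_J satisfies ℓ(x⁻¹x₁) ≤ ℓ(x⁻¹v) for all v ∈ gW_J, and y₁ ∈ gW_J satisfies ℓ(y⁻¹y₁) ≤ ℓ(y⁻¹v) for all v ∈ gW_J. If z ∈ gW_J is any chamber opposite to x₁ in the residue, i.e. x₁⁻¹z ∈ W_J and ℓ(x₁⁻¹z) = max{ℓ(z') : z' ∈ W_J}, then z = y₁. (Uniqueness statement established in the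 proof of Lemma 'opp': the projection of y to the residue is the unique chamber of the residue opposite the projection of x.) -/
/-!
The group `W` acts on `W × ZMod 2` by `s • (t, e) = (s t s, e + [t = s])` for `s` simple; the braid
relations hold because the left inversion sequence of the alternating word in `i, j` of length
`2 * M i j` consists of two equal halves. This action makes the parity of the number of
occurrences of `t` in the left inversion sequence of a word depend only on the product `w` of the
word, and for a reflection `t` this number is odd exactly when `t` is a left inversion of `w`. In
terms of chambers: a reflection separates `u` from `w` iff it separates exactly one of the pairs
`u, v` and `v, w`.

Now let `r` be a reflection stabilising the residue. Minimality shows that `r` separates neither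
`x` from `x₁` nor `y` from `y₁`, while maximality shows that it separates `x` from `y` and `x₁`
from `z`. By parity `r` does not separate `z` from `y₁`, and two chambers of a residue which no
reflection of the residue separates are equal.
-/

open CoxeterSystem

theorem prod_reverse_map_alternatingWord_two_mul {B G : Type*} [Monoid G] (f : B → G) (i j : B)
    (m : ℕ) : ((alternatingWord i j (2 * m)).map f).reverse.prod = (f j * f i) ^ m := by
  induction m with
  | zero => simp [alternatingWord]
  | succ m ih =>
    rw [show 2 * (m + 1) = 2 * m + 1 + 1 by ring, alternatingWord_succ', alternatingWord_succ']
    simp [ih, pow_succ]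

section

variable {B W : Type*} [Group W] {M : CoxeterMatrix B} (cs : CoxeterSystem M W)

theorem even_count_leftInvSeq_alternatingWord [DecidableEq W] (i j : B) (t : W) :
    Even ((cs.leftInvSeq (alternatingWord i j (2 * M i j))).count t) := by
  set l := cs.leftInvSeq (alternatingWord i j (2 * M i j)) with hl
  have length_l : l.length = 2 * M i j := by simp [hl]
  have periodic (k : ℕ) : cs.wordProd (alternatingWord j i (2 * (M i j + k) + 1)) =
      cs.wordProd (alternatingWord j i (2 * k + 1)) := by
    simp [prod_alternatingWord_eq_mul_pow, Nat.mul_add_div, pow_add]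
  have drop_eq_take : l.drop (M i j) = l.take (M i j) := by
    refine List.ext_getElem (by rw [List.length_drop, List.length_take]; omega) fun k _ hk ↦ ?_
    have hk : k < M i j := by rw [List.length_take] at hk; omega
    simp only [hl, List.getElem_drop, List.getElem_take]
    rw [getElem_leftInvSeq_alternatingWord _ _ _ _ _ (by omega),
      getElem_leftInvSeq_alternatingWord _ _ _ _ _ (by omega), periodic]
  rw [← List.take_append_drop (M i j) l, drop_eq_take, List.count_append]
  exact Even.add_self _

open scoped Classical in
/-- The action of the simple reflection `s i` on `W × ZMod 2` by conjugation in the first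
component, where the sign in the second component changes exactly at `s i`. -/
noncomputable def simpleSignedConj (i : B) : Function.End (W × ZMod 2) :=
  fun p ↦ (cs.simple i * p.1 * cs.simple i, p.2 + if p.1 = cs.simple i then 1 else 0)

open scoped Classical in
theorem simpleSignedConj_smul (i : B) (t : W) (e : ZMod 2) :
    simpleSignedConj cs i • (t, e) =
      (cs.simple i * t * cs.simple i, e + if t = cs.simple i then 1 else 0) :=
  rfl

open scoped Classical in
theorem prod_reverse_map_simpleSignedConj_smul (ω : List B) (t : W) (e : ZMod 2) :
    (ω.map (simpleSignedConj cs)).reverse.prod • (t, e) =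
      ((cs.wordProd ω)⁻¹ * t * cs.wordProd ω, e + (cs.leftInvSeq ω).count t) := by
  induction ω generalizing t e with
  | nil => simp
  | cons i ω ih =>
    have count_conj : ((cs.leftInvSeq ω).map (MulAut.conj (cs.simple i))).count t =
        (cs.leftInvSeq ω).count (cs.simple i * t * cs.simple i) := by
      rw [← List.count_map_of_injective (cs.leftInvSeq ω) _ (MulAut.conj (cs.simple i)).injective
        (cs.simple i * t * cs.simple i)]
      simp [mul_assoc]
    rw [List.map_cons, List.reverse_cons, List.prod_append, List.prod_singleton, mul_smul,
      simpleSignedConj_smul, ih]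
    ext
    · simp [wordProd_cons, mul_assoc]
    · simp only [leftInvSeq, List.count_cons, count_conj, beq_iff_eq, eq_comm (a := t)]
      push_cast
      ring

theorem isLiftable_simpleSignedConj : M.IsLiftable (simpleSignedConj cs) := by
  classical
  intro i j
  rw [← prod_reverse_map_alternatingWord_two_mul, M.symmetric i j]
  funext ⟨t, e⟩
  refine (prod_reverse_map_simpleSignedConj_smul cs _ t e).trans ?_
  rw [(even_count_leftInvSeq_alternatingWord cs j i t).natCast_zmod_two]
  simp [prod_alternatingWord_eq_mul_pow, Function.End.one_def]

/-- The signed conjugation action of `W` on `W × ZMod 2`, which extends `simpleSignedConj`. -/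
noncomputable def signedConj : W →* Function.End (W × ZMod 2) :=
  cs.lift ⟨simpleSignedConj cs, isLiftable_simpleSignedConj cs⟩

/-- The parity of the number of occurrences of `t` in the left inversion sequence of any word with
product `w`. The inverse appears because `signedConj` accumulates the inversions of a word
starting from its last letter. -/
noncomputable def inversionParity (w t : W) : ZMod 2 :=
  (signedConj cs w⁻¹ • (t, (0 : ZMod 2))).2

theorem signedConj_inv_wordProd (ω : List B) :
    signedConj cs (cs.wordProd ω)⁻¹ = (ω.map (simpleSignedConj cs)).reverse.prod := by
  have signedConj_simple (i : B) : signedConj cs (cs.simple i) = simpleSignedConj cs i :=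
    cs.lift_apply_simple (isLiftable_simpleSignedConj cs) i
  rw [← wordProd_reverse, wordProd, map_list_prod, List.map_map, ← List.map_reverse]
  congr 2
  exact funext signedConj_simple

open scoped Classical in
theorem inversionParity_wordProd (ω : List B) (t : W) :
    inversionParity cs (cs.wordProd ω) t = (cs.leftInvSeq ω).count t := by
  rw [inversionParity, signedConj_inv_wordProd, prod_reverse_map_simpleSignedConj_smul, zero_add]

theorem signedConj_inv_smul (w t : W) (e : ZMod 2) :
    signedConj cs w⁻¹ • (t, e) = (w⁻¹ * t * w, e + inversionParity cs w t) := by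
  obtain ⟨ω, rfl⟩ := cs.wordProd_surjective w
  rw [inversionParity_wordProd, signedConj_inv_wordProd, prod_reverse_map_simpleSignedConj_smul]

theorem inversionParity_one (t : W) : inversionParity cs 1 t = 0 := by
  classical
  simpa using inversionParity_wordProd cs [] t

theorem inversionParity_mul (v w t : W) :
    inversionParity cs (v * w) t =
      inversionParity cs v t + inversionParity cs w (v⁻¹ * t * v) := by
  rw [inversionParity, mul_inv_rev, map_mul, mul_smul, signedConj_inv_smul, signedConj_inv_smul,
    zero_add]

theorem inversionParity_simple_self (i : B) :
    inversionParity cs (cs.simple i) (cs.simple i) = 1 := by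
  classical
  simpa using inversionParity_wordProd cs [i] (cs.simple i)

variable {cs}

theorem mem_leftInvSeq_of_inversionParity_ne_zero {ω : List B} {t : W}
    (h : inversionParity cs (cs.wordProd ω) t ≠ 0) : t ∈ cs.leftInvSeq ω := by
  classical
  contrapose! h
  rw [inversionParity_wordProd, List.count_eq_zero_of_not_mem h, Nat.cast_zero]

theorem isLeftInversion_of_inversionParity_ne_zero {w t : W} (h : inversionParity cs w t ≠ 0) :
    cs.IsLeftInversion w t := by
  obtain ⟨ω, hω, rfl⟩ := cs.exists_isReduced w
  exact cs.isLeftInversion_of_mem_leftInvSeq hω (mem_leftInvSeq_of_inversionParity_ne_zero h)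

theorem inversionParity_self {t : W} (ht : cs.IsReflection t) : inversionParity cs t t = 1 := by
  obtain ⟨w, i, rfl⟩ := ht
  set t := w * cs.simple i * w⁻¹ with ht
  have conj_eq : w⁻¹ * t * w = cs.simple i := by rw [ht]; group
  have cancel : inversionParity cs w t + inversionParity cs w⁻¹ (cs.simple i) = 0 := by
    rw [← conj_eq, ← inversionParity_mul, mul_inv_cancel, inversionParity_one]
  calc inversionParity cs t t
      = inversionParity cs (w * (cs.simple i * w⁻¹)) t := by rw [← mul_assoc]
    _ = inversionParity cs w t + (1 + inversionParity cs w⁻¹ (cs.simple i)) := by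
        simp [inversionParity_mul cs w, inversionParity_mul cs (cs.simple i), conj_eq,
          inversionParity_simple_self]
    _ = 1 := by linear_combination cancel

theorem isLeftInversion_iff_inversionParity_eq_one {w t : W} (ht : cs.IsReflection t) :
    cs.IsLeftInversion w t ↔ inversionParity cs w t = 1 := by
  refine ⟨fun h ↦ ?_, fun h ↦ isLeftInversion_of_inversionParity_ne_zero (h ▸ one_ne_zero)⟩
  have not_inv : ¬ cs.IsLeftInversion (t * w) t := (ht.not_isLeftInversion_mul_right_iff).2 h
  have parity_eq_zero : inversionParity cs (t * w) t = 0 := by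
    contrapose! not_inv
    exact isLeftInversion_of_inversionParity_ne_zero not_inv
  rw [inversionParity_mul, inversionParity_self ht, inv_mul_cancel, one_mul] at parity_eq_zero
  exact (CharTwo.add_eq_zero.1 parity_eq_zero).symm

theorem exists_word_of_mem_closure_simple {J : Set B} {w : W}
    (hw : w ∈ Subgroup.closure (cs.simple '' J)) :
    ∃ ω : List B, (∀ i ∈ ω, i ∈ J) ∧ cs.wordProd ω = w := by
  induction hw using Subgroup.closure_induction with
  | mem _ h =>
    obtain ⟨i, hi, rfl⟩ := h
    exact ⟨[i], by simpa using hi, by simp⟩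
  | one => exact ⟨[], by simp, by simp⟩
  | mul _ _ _ _ hv hw =>
    obtain ⟨ω, hω, rfl⟩ := hv
    obtain ⟨ω', hω', rfl⟩ := hw
    exact ⟨ω ++ ω', by simpa [or_imp, forall_and] using ⟨hω, hω'⟩, cs.wordProd_append _ _⟩
  | inv _ _ hw =>
    obtain ⟨ω, hω, rfl⟩ := hw
    exact ⟨ω.reverse, by simpa using hω, cs.wordProd_reverse ω⟩

theorem exists_simple_mul_wordProd_eq_eraseIdx {i : B} {ω : List B}
    (h : ¬ cs.IsLeftDescent (cs.simple i * cs.wordProd ω) i) :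
    ∃ k < ω.length, cs.simple i * cs.wordProd ω = cs.wordProd (ω.eraseIdx k) := by
  have hs := cs.isReflection_simple i
  rw [← isLeftInversion_simple_iff_isLeftDescent, hs.not_isLeftInversion_mul_right_iff,
    isLeftInversion_iff_inversionParity_eq_one hs] at h
  obtain ⟨k, hk, hks⟩ := List.getElem_of_mem
    (mem_leftInvSeq_of_inversionParity_ne_zero (h ▸ one_ne_zero))
  refine ⟨k, by simpa using hk, ?_⟩
  rw [← getD_leftInvSeq_mul_wordProd, List.getD_eq_getElem _ _ hk, hks]

theorem exists_isLeftDescent_wordProd {J : Set B} (ω : List B) (hω : ∀ i ∈ ω, i ∈ J)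
    (hne : cs.wordProd ω ≠ 1) : ∃ j ∈ J, cs.IsLeftDescent (cs.wordProd ω) j := by
  match ω with
  | [] => simp at hne
  | i :: ω =>
    rw [List.forall_mem_cons] at hω
    rw [wordProd_cons] at hne ⊢
    by_cases hi : cs.IsLeftDescent (cs.simple i * cs.wordProd ω) i
    · exact ⟨i, hω.1, hi⟩
    obtain ⟨k, hk, hkω⟩ := exists_simple_mul_wordProd_eq_eraseIdx hi
    rw [hkω] at hne ⊢
    exact exists_isLeftDescent_wordProd (ω.eraseIdx k)
      (fun j hj ↦ hω.2 j (List.mem_of_mem_eraseIdx hj)) hne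
termination_by ω.length
decreasing_by simp [List.length_eraseIdx_of_lt hk]

theorem exists_isLeftDescent_of_mem_closure_simple {J : Set B} {w : W}
    (hw : w ∈ Subgroup.closure (cs.simple '' J)) (hne : w ≠ 1) :
    ∃ j ∈ J, cs.IsLeftDescent w j := by
  obtain ⟨ω, hω, rfl⟩ := exists_word_of_mem_closure_simple hw
  exact exists_isLeftDescent_wordProd ω hω hne

variable (cs) in
/-- The reflection `r` separates the chambers `u` and `v`, i.e. they lie on different sides of its
wall. This is encoded by saying that reflecting `v` brings it closer to `u`. -/
def Separates (r u v : W) : Prop :=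
  cs.length (u⁻¹ * (r * v)) < cs.length (u⁻¹ * v)

theorem separates_iff_inversionParity_eq_one {r : W} (hr : cs.IsReflection r) (u v : W) :
    Separates cs r u v ↔ inversionParity cs (u⁻¹ * v) (u⁻¹ * r * u) = 1 := by
  have hru : cs.IsReflection (u⁻¹ * r * u) := by simpa using hr.conj u⁻¹
  rw [← isLeftInversion_iff_inversionParity_eq_one hru, IsLeftInversion, and_iff_right hru]
  simp [Separates, mul_assoc]

theorem separates_trans_iff {r : W} (hr : cs.IsReflection r) (u v w : W) :
    Separates cs r u w ↔ (Separates cs r u v ↔ ¬ Separates cs r v w) := by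
  have add_eq_one_iff (a b : ZMod 2) : a + b = 1 ↔ (a = 1 ↔ ¬ b = 1) := by decide +revert
  have cocycle : inversionParity cs (u⁻¹ * w) (u⁻¹ * r * u) =
      inversionParity cs (u⁻¹ * v) (u⁻¹ * r * u) +
        inversionParity cs (v⁻¹ * w) (v⁻¹ * r * v) := by
    simpa [mul_assoc] using inversionParity_mul cs (u⁻¹ * v) (v⁻¹ * w) (u⁻¹ * r * u)
  simp only [separates_iff_inversionParity_eq_one hr, cocycle, add_eq_one_iff]

theorem separates_of_length_le {r u v : W} (hr : cs.IsReflection r)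
    (h : cs.length (u⁻¹ * (r * v)) ≤ cs.length (u⁻¹ * v)) : Separates cs r u v := by
  have hrv : cs.IsReflection (v⁻¹ * r * v) := by simpa using hr.conj v⁻¹
  refine lt_of_le_of_ne h ?_
  simpa [mul_assoc] using hrv.length_mul_left_ne (u⁻¹ * v)

theorem eq_of_forall_not_separates {J : Set B} {u v : W}
    (huv : u⁻¹ * v ∈ Subgroup.closure (cs.simple '' J))
    (h : ∀ r, cs.IsReflection r → u⁻¹ * r * u ∈ Subgroup.closure (cs.simple '' J) →
      ¬ Separates cs r u v) :
    u = v := by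
  by_contra hne
  obtain ⟨j, hj, hdesc⟩ :=
    exists_isLeftDescent_of_mem_closure_simple huv (mt inv_mul_eq_one.1 hne)
  refine h (u * cs.simple j * u⁻¹) ((cs.isReflection_simple j).conj u) ?_ ?_
  · simpa [mul_assoc] using Subgroup.subset_closure (Set.mem_image_of_mem cs.simple hj)
  · simpa [Separates, IsLeftDescent, mul_assoc] using hdesc

theorem opp_projection_unique_opposite_general {J : Set B} {g x y x₁ y₁ z : W}
    {WJ : Subgroup W} (hWJ : WJ = Subgroup.closure (cs.simple '' J))
    (hxy : ∀ r, cs.IsReflection r → g⁻¹ * r * g ∈ WJ → Separates cs r x y)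
    (hx₁ : g⁻¹ * x₁ ∈ WJ)
    (hx₁min : ∀ v, g⁻¹ * v ∈ WJ → cs.length (x⁻¹ * x₁) ≤ cs.length (x⁻¹ * v))
    (hy₁ : g⁻¹ * y₁ ∈ WJ)
    (hy₁min : ∀ v, g⁻¹ * v ∈ WJ → cs.length (y⁻¹ * y₁) ≤ cs.length (y⁻¹ * v))
    (hz : g⁻¹ * z ∈ WJ)
    (hzmax : ∀ z' ∈ WJ, cs.length z' ≤ cs.length (x₁⁻¹ * z)) :
    z = y₁ := by
  have mem_of_residue {u v : W} (hu : g⁻¹ * u ∈ WJ) (hv : g⁻¹ * v ∈ WJ) : u⁻¹ * v ∈ WJ := by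
    simpa [mul_assoc] using WJ.mul_mem (WJ.inv_mem hu) hv
  have hzy₁ := mem_of_residue hz hy₁
  subst hWJ
  refine eq_of_forall_not_separates hzy₁ fun r hr hrz z_y₁ ↦ ?_
  set WJ := Subgroup.closure (cs.simple '' J)
  have hrg : g⁻¹ * r * g ∈ WJ := by
    simpa [mul_assoc] using WJ.mul_mem (WJ.mul_mem hz hrz) (WJ.inv_mem hz)
  have r_stabilizes {v : W} (hv : g⁻¹ * v ∈ WJ) : g⁻¹ * (r * v) ∈ WJ := by
    simpa [mul_assoc] using WJ.mul_mem hrg hv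
  have x_x₁ : ¬ Separates cs r x x₁ := not_lt.2 (hx₁min _ (r_stabilizes hx₁))
  have y_y₁ : ¬ Separates cs r y y₁ := not_lt.2 (hy₁min _ (r_stabilizes hy₁))
  have x₁_z : Separates cs r x₁ z :=
    separates_of_length_le hr (hzmax _ (mem_of_residue hx₁ (r_stabilizes hz)))
  have x_y₁ : Separates cs r x y₁ :=
    (separates_trans_iff hr x y y₁).2 (iff_of_true (hxy r hr hrg) y_y₁)
  have x₁_y₁ : Separates cs r x₁ y₁ :=
    not_not.1 (mt ((separates_trans_iff hr x x₁ y₁).1 x_y₁).2 x_x₁)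
  exact ((separates_trans_iff hr x₁ z y₁).1 x₁_y₁).1 x₁_z z_y₁

end

/-- Uniqueness statement from the proof of Lemma "opp": the projection of `y` to the
residue `g • W_J` is the unique chamber of the residue opposite the projection of `x`. -/
theorem opp_projection_unique_opposite
    {B : Type*} {W : Type*} [Group W] [Finite W] {M : CoxeterMatrix B}
    (cs : CoxeterSystem M W)
    (w₀ : W) (hw₀ : ∀ w : W, cs.length w ≤ cs.length w₀)
    (x y : W) (hxy : cs.length (x⁻¹ * y) = cs.length w₀)
    (J : Set B) (g : W)
    (WJ : Subgroup W) (hWJ : WJ = Subgroup.closure (cs.simple '' J))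
    (x₁ : W) (hx₁ : g⁻¹ * x₁ ∈ WJ)
    (hx₁min : ∀ v : W, g⁻¹ * v ∈ WJ → cs.length (x⁻¹ * x₁) ≤ cs.length (x⁻¹ * v))
    (y₁ : W) (hy₁ : g⁻¹ * y₁ ∈ WJ)
    (hy₁min : ∀ v : W, g⁻¹ * v ∈ WJ → cs.length (y⁻¹ * y₁) ≤ cs.length (y⁻¹ * v))
    (z : W) (hz : g⁻¹ * z ∈ WJ)
    (hzopp : x₁⁻¹ * z ∈ WJ ∧ ∀ z' ∈ WJ, cs.length z' ≤ cs.length (x₁⁻¹ * z)) :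
    z = y₁ := by
  exact opp_projection_unique_opposite_general hWJ
    (fun r hr _ ↦ separates_of_length_le hr (hxy ▸ hw₀ _)) hx₁ hx₁min hy₁ hy₁min hz hzopp.2
end

section
/- Let (W,S) be a finite Coxeter system with length function ℓ and let w₀ ∈ W be an element of maximal length. Let J, K ⊆ S and g, h ∈ W. Set R = gW_J and X = hW_K, and define P = {u ∈ R : there exists x ∈ X with ℓ(x⁻¹u) ≤ ℓ(x⁻¹v) for all v ∈ R} (the set of projections to R of chambers of the residue X) and Q = {u ∈ R : there exists x ∈ X with ℓ((x·w₀)⁻¹u) ≤ ℓ((x·w₀)⁻¹v) for all v ∈ R} (the set of projections to R of chambers of the residue opposite to X). Then for every u ∈ P there exists v ∈ Q with u⁻¹v ∈ W_J and ℓ(u⁻¹v) = max{ℓ(z) : z ∈ W_J}, and for every v ∈ Q there exists u ∈ P with v⁻¹u ∈ W_J and ℓ(v⁻¹u) = max{ℓ(z) : z ∈ W_J}. (This is Corollary 'cor1' of the paper expressed in the Coxeter complex: every chamber of the projection of a residue X to R has an opposite, in the residue R, lying in the projection of the residue opposite X.) -/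
/-!
The argument rests on the classical identity `N(ab) = N(a) ∆ a N(b) a⁻¹` for the sets
`N(w) = {t | ℓ(tw) < ℓ(w)}` of left inversions, together with `|N(w)| = ℓ(w)`. To obtain it,
`W` acts on `W × ℤ/2` so that a word `ω` shifts the second coordinate by the number of occurrences
of a given reflection in the inversion sequence of `ω`. The parity of this number therefore
depends on the product of `ω` only, and it is odd exactly at the inversions of that product.

If `w₀` is longest, then `N(w₀)` consists of all reflections, whence `ℓ(w w₀) = ℓ(w₀) - ℓ(w)`: a
chamber is far from `x w₀` exactly when it is near `x`. If `a` is shortest in `a W_J`, then `N(a)`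
and `a N(z) a⁻¹` are disjoint for `z ∈ W_J`, whence `ℓ(az) = ℓ(a) + ℓ(z)`: the projection `u` of `x`
to a residue `R` is a gate, that is, `d(x, v) = d(x, u) + d(u, v)` for `v ∈ R`. So the projection of
`x w₀` is the chamber of `R` farthest from `u`, i.e. opposite to `u` in `R`.
-/

open scoped symmDiff

namespace CoxeterComplex

open CoxeterSystem

variable {B W : Type*} [Group W] {M : CoxeterMatrix B} (cs : CoxeterSystem M W)

section InversionSequences

theorem leftInvSeq_append (ω ω' : List B) :
    cs.leftInvSeq (ω ++ ω') =
      cs.leftInvSeq ω ++ (cs.leftInvSeq ω').map (MulAut.conj (cs.wordProd ω)) := by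
  induction ω with
  | nil => simp
  | cons i ω ih =>
    simp [leftInvSeq, ih, wordProd_cons, Function.comp_def, mul_assoc]

theorem leftInvSeq_alternatingWord (i j : B) (p : ℕ) :
    cs.leftInvSeq (alternatingWord i j (2 * p)) =
      (List.range (2 * p)).map fun k ↦ cs.simple i * (cs.simple j * cs.simple i) ^ k := by
  refine List.ext_getElem (by simp) fun k hk _ ↦ ?_
  rw [cs.getElem_leftInvSeq_alternatingWord i j p k (by simpa using hk),
    prod_alternatingWord_eq_mul_pow, if_neg (by simp)]
  simp [show (2 * k + 1) / 2 = k by lia]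

theorem prod_map_alternatingWord {G : Type*} [Monoid G] (f : B → G) (i j : B) (p : ℕ) :
    ((alternatingWord i j (2 * p)).map f).prod = (f i * f j) ^ p := by
  induction p with
  | zero => simp [alternatingWord]
  | succ p ih => simp [mul_add, alternatingWord_succ, pow_succ, ih]

variable [DecidableEq W]

theorem count_map_conj (a t : W) (l : List W) :
    (l.map (MulAut.conj a)).count (MulAut.conj a t) = l.count t :=
  List.count_map_of_injective l _ (MulAut.conj a).injective t

theorem even_count_leftInvSeq_alternatingWord (i j : B) (t : W) :
    Even ((cs.leftInvSeq (alternatingWord i j (2 * M i j))).count t) := by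
  have periodic (k : ℕ) : (cs.simple j * cs.simple i) ^ (M i j + k) =
      (cs.simple j * cs.simple i) ^ k := by
    rw [pow_add, cs.simple_mul_simple_pow', one_mul]
  rw [leftInvSeq_alternatingWord, two_mul, List.range_add, List.map_append, List.map_map,
    List.count_append]
  simp only [Function.comp_def, periodic]
  exact Even.add_self _

/-- The permutation `(t, e) ↦ (s t s, e + [t = s])` of `W × ℤ/2` attached to a simple reflection
`s`, used to count inversions modulo two. For convenience `t` ranges over all of `W` instead of
the reflections only. -/
def signedConj (i : B) : Equiv.Perm (W × ZMod 2) :=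
  (MulAut.conj (cs.simple i)).toEquiv.prodShear fun t ↦
    Equiv.addRight (if t = cs.simple i then 1 else 0)

theorem prod_map_signedConj_apply (ω : List B) (t : W) (e : ZMod 2) :
    (ω.map (signedConj cs)).prod (t, e) =
      (MulAut.conj (cs.wordProd ω) t,
        e + (cs.leftInvSeq ω).count (MulAut.conj (cs.wordProd ω) t)) := by
  induction ω with
  | nil => simp
  | cons i ω ih =>
    obtain ⟨r, hr⟩ : ∃ r, r = MulAut.conj (cs.wordProd ω) t := ⟨_, rfl⟩
    have conj_eq_simple_iff : cs.simple i = MulAut.conj (cs.simple i) r ↔ r = cs.simple i := by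
      rw [eq_comm, ← MulEquiv.eq_symm_apply]; simp
    rw [List.map_cons, List.prod_cons, Equiv.Perm.mul_apply, ih, wordProd_cons, map_mul,
      MulAut.mul_apply, ← hr, leftInvSeq, List.count_cons, count_map_conj]
    simp only [signedConj, Equiv.prodShear_apply, beq_iff_eq, conj_eq_simple_iff]
    simp [add_assoc]

theorem isLiftable_signedConj : M.IsLiftable (signedConj cs) := by
  intro i j
  ext1 ⟨t, e⟩
  have trivial_prod : cs.wordProd (alternatingWord i j (2 * M i j)) = 1 := by
    simp [prod_alternatingWord_eq_mul_pow]
  have even_count := (even_count_leftInvSeq_alternatingWord cs i j t).natCast_zmod_two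
  rw [← prod_map_alternatingWord, prod_map_signedConj_apply, trivial_prod]
  simpa using even_count

theorem odd_count_leftInvSeq_congr {ω ω' : List B} (h : cs.wordProd ω = cs.wordProd ω') (t : W) :
    Odd ((cs.leftInvSeq ω).count t) ↔ Odd ((cs.leftInvSeq ω').count t) := by
  let action : W →* Equiv.Perm (W × ZMod 2) := cs.lift ⟨signedConj cs, isLiftable_signedConj cs⟩
  have action_wordProd (ω : List B) :
      action (cs.wordProd ω) = (ω.map (signedConj cs)).prod := by
    rw [wordProd, map_list_prod, List.map_map]
    congr! 2
    ext1 i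
    exact cs.lift_apply_simple (isLiftable_signedConj cs) i
  obtain ⟨r, rfl⟩ := (MulAut.conj (cs.wordProd ω)).surjective t
  have same_action : (action (cs.wordProd ω) (r, 0)).2 = (action (cs.wordProd ω') (r, 0)).2 := by
    rw [h]
  simp only [action_wordProd, prod_map_signedConj_apply, zero_add] at same_action
  rw [← h] at same_action
  rw [← ZMod.natCast_eq_one_iff_odd, same_action, ZMod.natCast_eq_one_iff_odd]

theorem count_conj_leftInvSeq_append (ω ω' : List B) (t : W) :
    (cs.leftInvSeq (ω ++ ω')).count (MulAut.conj (cs.wordProd ω) t) =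
      (cs.leftInvSeq ω).count (MulAut.conj (cs.wordProd ω) t) + (cs.leftInvSeq ω').count t := by
  rw [leftInvSeq_append, List.count_append, count_map_conj]

theorem odd_count_leftInvSeq_palindrome (ω : List B) (i : B) :
    Odd ((cs.leftInvSeq (ω ++ i :: ω.reverse)).count
      (MulAut.conj (cs.wordProd ω) (cs.simple i))) := by
  have even_count : Even ((cs.leftInvSeq (ω ++ ω.reverse)).count
      (MulAut.conj (cs.wordProd ω) (cs.simple i))) := by
    have trivial_prod : cs.wordProd (ω ++ ω.reverse) = cs.wordProd [] := by
      simp [wordProd_append]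
    simp [← Nat.not_odd_iff_even, odd_count_leftInvSeq_congr cs trivial_prod]
  have count_cons : (cs.leftInvSeq (i :: ω.reverse)).count (cs.simple i) =
      (cs.leftInvSeq ω.reverse).count (cs.simple i) + 1 := by
    have := count_map_conj (cs.simple i) (cs.simple i) (cs.leftInvSeq ω.reverse)
    simp_all [leftInvSeq]
  rw [count_conj_leftInvSeq_append, count_cons, ← add_assoc, ← count_conj_leftInvSeq_append]
  exact even_count.add_one

theorem exists_wordProd_eq_and_odd_count {t : W} (ht : cs.IsReflection t) :
    ∃ ω, cs.wordProd ω = t ∧ Odd ((cs.leftInvSeq ω).count t) := by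
  obtain ⟨w, i, rfl⟩ := ht
  obtain ⟨ω, rfl⟩ := cs.wordProd_surjective w
  exact ⟨ω ++ i :: ω.reverse, by simp [wordProd_append, wordProd_cons, mul_assoc],
    odd_count_leftInvSeq_palindrome cs ω i⟩

theorem isLeftInversion_of_odd_count {ω : List B} {t : W}
    (h : Odd ((cs.leftInvSeq ω).count t)) : cs.IsLeftInversion (cs.wordProd ω) t := by
  obtain ⟨ω', hω', hprod⟩ := cs.exists_isReduced (cs.wordProd ω)
  rw [odd_count_leftInvSeq_congr cs hprod] at h
  rw [hprod]
  exact cs.isLeftInversion_of_mem_leftInvSeq hω' (List.count_pos_iff.mp h.pos)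

theorem isLeftInversion_wordProd_iff_odd_count (ω : List B) (t : W) :
    cs.IsLeftInversion (cs.wordProd ω) t ↔ Odd ((cs.leftInvSeq ω).count t) := by
  refine ⟨fun ht ↦ ?_, isLeftInversion_of_odd_count cs⟩
  by_contra not_odd
  obtain ⟨υ, rfl, odd_count⟩ := exists_wordProd_eq_and_odd_count cs ht.1
  -- Otherwise `t = π υ` would be a left inversion of both `π ω` and `t * π ω`.
  have odd_count_append : Odd ((cs.leftInvSeq (υ ++ ω)).count (cs.wordProd υ)) := by
    have count_append := count_conj_leftInvSeq_append cs υ ω (cs.wordProd υ)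
    rw [MulAut.conj_apply, mul_inv_cancel_right] at count_append
    rw [count_append]
    exact odd_count.add_even (Nat.not_odd_iff_even.mp not_odd)
  have inversion := isLeftInversion_of_odd_count cs odd_count_append
  rw [wordProd_append] at inversion
  exact ht.1.isLeftInversion_mul_right_iff.mp inversion ht

end InversionSequences

section LeftInversions

/-- The set `N(w)` of left inversions of `w`. -/
def leftInversions (w : W) : Set W := {t | cs.IsLeftInversion w t}

theorem leftInversions_one : leftInversions cs 1 = ∅ := by
  simp [leftInversions, IsLeftInversion]

theorem leftInversions_simple (i : B) : leftInversions cs (cs.simple i) = {cs.simple i} := by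
  classical
  ext t
  have := isLeftInversion_wordProd_iff_odd_count cs [i] t
  by_cases h : cs.simple i = t <;> simp_all [leftInversions, eq_comm]

theorem leftInversions_mul (a b : W) :
    leftInversions cs (a * b) = leftInversions cs a ∆ (MulAut.conj a '' leftInversions cs b) := by
  classical
  ext t
  obtain ⟨t, rfl⟩ := (MulAut.conj a).surjective t
  obtain ⟨ω, rfl⟩ := cs.wordProd_surjective a
  obtain ⟨ω', rfl⟩ := cs.wordProd_surjective b
  rw [Set.mem_symmDiff, (MulAut.conj (cs.wordProd ω)).injective.mem_set_image, ← wordProd_append]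
  simp only [leftInversions, Set.mem_ofPred_eq, isLeftInversion_wordProd_iff_odd_count,
    count_conj_leftInvSeq_append]
  grind

theorem exists_finset_coe_eq_leftInversions (w : W) :
    ∃ T : Finset W, (T : Set W) = leftInversions cs w ∧ T.card = cs.length w := by
  classical
  obtain ⟨ω, hω, rfl⟩ := cs.exists_isReduced w
  refine ⟨(cs.leftInvSeq ω).toFinset, ?_, ?_⟩
  · ext t
    have := hω.nodup_leftInvSeq.count (a := t)
    by_cases ht : t ∈ cs.leftInvSeq ω <;>
      simp_all [leftInversions, isLeftInversion_wordProd_iff_odd_count]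
  · rw [List.toFinset_card_of_nodup hω.nodup_leftInvSeq, cs.length_leftInvSeq, hω.eq]

theorem finite_leftInversions (w : W) : (leftInversions cs w).Finite := by
  obtain ⟨T, hT, -⟩ := exists_finset_coe_eq_leftInversions cs w
  exact hT ▸ T.finite_toSet

theorem ncard_leftInversions (w : W) : (leftInversions cs w).ncard = cs.length w := by
  obtain ⟨T, hT, hcard⟩ := exists_finset_coe_eq_leftInversions cs w
  rw [← hT, Set.ncard_coe_finset, hcard]

theorem length_mul_eq_add_of_disjoint {a b : W}
    (h : Disjoint (leftInversions cs a) (MulAut.conj a '' leftInversions cs b)) :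
    cs.length (a * b) = cs.length a + cs.length b := by
  have eq_union : leftInversions cs (a * b) =
      leftInversions cs a ∪ MulAut.conj a '' leftInversions cs b := by
    rw [leftInversions_mul]
    exact h.symmDiff_eq_sup
  rw [← ncard_leftInversions, eq_union,
    Set.ncard_union_eq h (finite_leftInversions cs a) ((finite_leftInversions cs b).image _),
    Set.ncard_image_of_injective _ (MulAut.conj a).injective, ncard_leftInversions,
    ncard_leftInversions]

end LeftInversions

section LongestElement

variable {cs} {w₀ : W} (hw₀ : ∀ w, cs.length w ≤ cs.length w₀)
include hw₀

theorem leftInversions_longest : leftInversions cs w₀ = {t | cs.IsReflection t} := by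
  ext t
  exact ⟨fun h ↦ h.1, fun ht ↦ ⟨ht, (hw₀ _).lt_of_ne (ht.length_mul_right_ne w₀)⟩⟩

theorem leftInversions_subset_longest (w : W) : leftInversions cs w ⊆ leftInversions cs w₀ := by
  rw [leftInversions_longest hw₀]
  exact fun _ ht ↦ ht.1

theorem leftInversions_mul_longest (w : W) :
    leftInversions cs (w * w₀) = leftInversions cs w₀ \ leftInversions cs w := by
  have conj_invariant : MulAut.conj w '' leftInversions cs w₀ = leftInversions cs w₀ := by
    ext t
    obtain ⟨t, rfl⟩ := (MulAut.conj w).surjective t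
    rw [(MulAut.conj w).injective.mem_set_image]
    simp [leftInversions_longest hw₀]
  rw [leftInversions_mul, conj_invariant, symmDiff_of_le (leftInversions_subset_longest hw₀ w)]

theorem length_mul_longest_add_length (w : W) :
    cs.length (w * w₀) + cs.length w = cs.length w₀ := by
  rw [← ncard_leftInversions, leftInversions_mul_longest hw₀, ← ncard_leftInversions cs w,
    Set.ncard_sdiff_add_ncard_of_subset (leftInversions_subset_longest hw₀ w)
      (finite_leftInversions cs w₀), ncard_leftInversions]

end LongestElement

section ParabolicSubgroups

/-- The standard parabolic subgroup `W_J`. -/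
def parabolic (J : Set B) : Subgroup W := Subgroup.closure (cs.simple '' J)

variable {J : Set B}

theorem simple_mem_parabolic {i : B} (hi : i ∈ J) : cs.simple i ∈ parabolic cs J :=
  Subgroup.subset_closure (Set.mem_image_of_mem _ hi)

variable {cs}

theorem leftInversions_subset_parabolic {z : W} (hz : z ∈ parabolic cs J) :
    leftInversions cs z ⊆ parabolic cs J := by
  induction hz using Subgroup.closure_induction'' with
  | mem _ hs =>
    obtain ⟨i, hi, rfl⟩ := hs
    simpa [leftInversions_simple] using simple_mem_parabolic cs hi
  | inv_mem _ hs =>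
    obtain ⟨i, hi, rfl⟩ := hs
    simpa [leftInversions_simple] using simple_mem_parabolic cs hi
  | one => simp [leftInversions_one]
  | mul a b ha hb iha ihb =>
    rw [leftInversions_mul]
    refine symmDiff_le_sup.trans (Set.union_subset iha ?_)
    rintro _ ⟨t, ht, rfl⟩
    exact mul_mem (mul_mem ha (ihb ht)) (inv_mem ha)

theorem length_mul_of_forall_mem_parabolic_length_le {a z : W}
    (ha : ∀ y ∈ parabolic cs J, cs.length a ≤ cs.length (a * y)) (hz : z ∈ parabolic cs J) :
    cs.length (a * z) = cs.length a + cs.length z := by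
  refine length_mul_eq_add_of_disjoint cs (Set.disjoint_left.mpr ?_)
  rintro _ ⟨-, hlt⟩ ⟨t, ht, rfl⟩
  rw [MulAut.conj_apply, inv_mul_cancel_right] at hlt
  exact (ha t (leftInversions_subset_parabolic hz ht)).not_gt hlt

end ParabolicSubgroups

section Projections

/-- The chambers of the residue `gW_J`. -/
def residue (J : Set B) (g : W) : Set W := {u | g⁻¹ * u ∈ parabolic cs J}

/-- `u` is a projection of the chamber `x` to the set `R` of chambers. -/
def IsProjection (R : Set W) (x u : W) : Prop :=
  u ∈ R ∧ ∀ v ∈ R, cs.length (x⁻¹ * u) ≤ cs.length (x⁻¹ * v)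

/-- The set of projections to `R` of the chambers in `X`. -/
def projection (R X : Set W) : Set W := {u | ∃ x ∈ X, IsProjection cs R x u}

/-- The chambers `u` and `v` are opposite in a residue of type `J` that contains both. -/
def IsOppositeInResidue (J : Set B) (u v : W) : Prop :=
  u⁻¹ * v ∈ parabolic cs J ∧ ∀ z ∈ parabolic cs J, cs.length z ≤ cs.length (u⁻¹ * v)

variable {cs} {J : Set B} {g u v x w₀ : W} {R : Set W}

theorem inv_mul_mem_parabolic (hu : u ∈ residue cs J g) (hv : v ∈ residue cs J g) :
    u⁻¹ * v ∈ parabolic cs J := by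
  simpa [mul_assoc] using mul_mem (inv_mem (show g⁻¹ * u ∈ parabolic cs J from hu)) hv

theorem mul_mem_residue (hu : u ∈ residue cs J g) {z : W} (hz : z ∈ parabolic cs J) :
    u * z ∈ residue cs J g := by
  simpa [residue, mul_assoc] using mul_mem hu hz

theorem IsOppositeInResidue.symm (h : IsOppositeInResidue cs J u v) :
    IsOppositeInResidue cs J v u := by
  have inv_eq : (u⁻¹ * v)⁻¹ = v⁻¹ * u := by group
  rw [IsOppositeInResidue, ← inv_eq, cs.length_inv, inv_mem_iff]
  exact h

variable (cs) in
theorem exists_isProjection (hR : R.Nonempty) (x : W) : ∃ u, IsProjection cs R x u := by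
  obtain ⟨u, hu, hmin⟩ := exists_minimalFor_of_wellFoundedLT (· ∈ R)
    (fun v ↦ cs.length (x⁻¹ * v)) hR
  exact ⟨u, hu, fun v hv ↦ (le_total _ _).elim id (hmin hv)⟩

theorem IsProjection.length_eq_add (hu : IsProjection cs (residue cs J g) x u)
    (hv : v ∈ residue cs J g) :
    cs.length (x⁻¹ * v) = cs.length (x⁻¹ * u) + cs.length (u⁻¹ * v) := by
  have shortest (z : W) (hz : z ∈ parabolic cs J) :
      cs.length (x⁻¹ * u) ≤ cs.length (x⁻¹ * u * z) := by
    rw [mul_assoc]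
    exact hu.2 _ (mul_mem_residue hu.1 hz)
  simpa [mul_assoc] using
    length_mul_of_forall_mem_parabolic_length_le shortest (inv_mul_mem_parabolic hu.1 hv)

theorem length_inv_mul_longest_mul_add_length (hw₀ : ∀ w, cs.length w ≤ cs.length w₀) (x u : W) :
    cs.length ((x * w₀)⁻¹ * u) + cs.length (x⁻¹ * u) = cs.length w₀ := by
  have inv_eq : ((x * w₀)⁻¹ * u)⁻¹ = (x⁻¹ * u)⁻¹ * w₀ := by group
  rw [← cs.length_inv, inv_eq, ← cs.length_inv (x⁻¹ * u)]
  exact length_mul_longest_add_length hw₀ _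

theorem IsProjection.isOppositeInResidue (hw₀ : ∀ w, cs.length w ≤ cs.length w₀)
    (hu : IsProjection cs (residue cs J g) x u)
    (hv : IsProjection cs (residue cs J g) (x * w₀) v) : IsOppositeInResidue cs J u v := by
  refine ⟨inv_mul_mem_parabolic hu.1 hv.1, fun z hz ↦ ?_⟩
  have huz : u * z ∈ residue cs J g := mul_mem_residue hu.1 hz
  have gate_v := hu.length_eq_add hv.1
  have gate_uz := hu.length_eq_add huz
  have nearest := hv.2 _ huz
  have opposite_v := length_inv_mul_longest_mul_add_length hw₀ x v
  have opposite_uz := length_inv_mul_longest_mul_add_length hw₀ x (u * z)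
  rw [inv_mul_cancel_left] at gate_uz
  lia

end Projections

end CoxeterComplex

open CoxeterComplex

theorem cor1_projections_of_opposite_residues_general
    {B W : Type*} [Group W] {M : CoxeterMatrix B} (cs : CoxeterSystem M W)
    (w₀ : W) (hw₀ : ∀ w : W, cs.length w ≤ cs.length w₀) (J : Set B) (g : W) (X : Set W) :
    (∀ u ∈ projection cs (residue cs J g) X, ∃ v ∈ projection cs (residue cs J g) ((· * w₀) '' X),
      IsOppositeInResidue cs J u v) ∧
    (∀ v ∈ projection cs (residue cs J g) ((· * w₀) '' X), ∃ u ∈ projection cs (residue cs J g) X,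
      IsOppositeInResidue cs J v u) := by
  have nonempty : (residue cs J g).Nonempty := ⟨g, by simp [residue, one_mem]⟩
  constructor
  · rintro u ⟨x, hx, hu⟩
    obtain ⟨v, hv⟩ := exists_isProjection cs nonempty (x * w₀)
    exact ⟨v, ⟨x * w₀, Set.mem_image_of_mem _ hx, hv⟩, hu.isOppositeInResidue hw₀ hv⟩
  · rintro v ⟨_, ⟨x, hx, rfl⟩, hv⟩
    obtain ⟨u, hu⟩ := exists_isProjection cs nonempty x
    exact ⟨u, ⟨x, hx, hu⟩, (hu.isOppositeInResidue hw₀ hv).symm⟩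

/-- Corollary "cor1" in the Coxeter complex: every chamber of the projection of a
residue `X = h • W_K` to the residue `R = g • W_J` has an opposite, in the residue `R`,
lying in the projection to `R` of the residue opposite `X`. -/
theorem cor1_projections_of_opposite_residues
    {B : Type*} {W : Type*} [Group W] [Finite W] {M : CoxeterMatrix B}
    (cs : CoxeterSystem M W)
    (w₀ : W) (hw₀ : ∀ w : W, cs.length w ≤ cs.length w₀)
    (J K : Set B) (g h : W)
    (WJ WK : Subgroup W)
    (hWJ : WJ = Subgroup.closure (cs.simple '' J))
    (hWK : WK = Subgroup.closure (cs.simple '' K))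
    (P Q : Set W)
    (hP : P = {u : W | g⁻¹ * u ∈ WJ ∧ ∃ x : W, h⁻¹ * x ∈ WK ∧
      ∀ v : W, g⁻¹ * v ∈ WJ → cs.length (x⁻¹ * u) ≤ cs.length (x⁻¹ * v)})
    (hQ : Q = {u : W | g⁻¹ * u ∈ WJ ∧ ∃ x : W, h⁻¹ * x ∈ WK ∧
      ∀ v : W, g⁻¹ * v ∈ WJ → cs.length ((x * w₀)⁻¹ * u) ≤ cs.length ((x * w₀)⁻¹ * v)}) :
    (∀ u ∈ P, ∃ v ∈ Q, u⁻¹ * v ∈ WJ ∧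
        ∀ z ∈ WJ, cs.length z ≤ cs.length (u⁻¹ * v)) ∧
    (∀ v ∈ Q, ∃ u ∈ P, v⁻¹ * u ∈ WJ ∧
        ∀ z ∈ WJ, cs.length z ≤ cs.length (v⁻¹ * u)) := by
  subst hWJ hWK hP hQ
  simpa [projection, IsProjection, residue, parabolic, IsOppositeInResidue, and_left_comm,
    -Set.image_mul_right] using
    cor1_projections_of_opposite_residues_general cs w₀ hw₀ J g
      {x | h⁻¹ * x ∈ Subgroup.closure (cs.simple '' K)}
end
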